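/- For every integer t ≥ 1, the number of quadruples (a, b, c, d) of integers with a² + b² + c² + d² = 5^t such that not all of a, b, c, d are divisible by 5 is exactly 48·5^{t−1}. -/

import Mathlib

/-!
Fix a system `R` of six quaternions of norm `5`, one for each class up to left multiplication by
units. Modulo `5` the quaternions form the `2 × 2` matrices over `𝔽₅`, so an `x` with `5 ∣ N(x)` and
`5 ∤ x` has rank one modulo `5`, and its rows span one of the six lines of the plane; exactly one
`p ∈ R` satisfies `5 ∣ x * p`. Now multiply every primitive `x` of norm `5 ^ t` by every `p ∈ R`.
For `t ≥ 1` exactly one of the six products is divisible by `5`, while the other products run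
through the primitive quaternions of norm `5 ^ (t + 1)`, each obtained once. Hence the count is
multiplied by `5` at each step. At `t = 0`, starting from the eight units, no product is divisible
by `5` and the factor is `6`.
-/

open Quaternion Set

namespace FourSquares

section CommRing

variable {A : Type*} [CommRing A] {q : A} {x y p p' : ℍ[A]} {R : Set ℍ[A]} {t : ℕ}

@[simp] theorem re_equivProd_symm (z : A × A × A × A) : ((equivProd A).symm z).re = z.1 := rfl

@[simp] theorem imI_equivProd_symm (z : A × A × A × A) : ((equivProd A).symm z).imI = z.2.1 := rfl

@[simp] theorem imJ_equivProd_symm (z : A × A × A × A) : ((equivProd A).symm z).imJ = z.2.2.1 :=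
  rfl

@[simp] theorem imK_equivProd_symm (z : A × A × A × A) : ((equivProd A).symm z).imK = z.2.2.2 :=
  rfl

theorem ncard_image_equivProd_symm (s : Finset (A × A × A × A)) :
    ((equivProd A).symm '' s).ncard = s.card := by
  rw [ncard_image_of_injective _ (Equiv.injective _), ncard_coe_finset]

theorem coe_dvd_iff :
    (q : ℍ[A]) ∣ x ↔ q ∣ x.re ∧ q ∣ x.imI ∧ q ∣ x.imJ ∧ q ∣ x.imK := by
  constructor
  · rintro ⟨y, rfl⟩
    simp
  · rintro ⟨⟨a, ha⟩, ⟨b, hb⟩, ⟨c, hc⟩, ⟨d, hd⟩⟩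
    refine ⟨(equivProd A).symm (a, b, c, d), ?_⟩
    ext <;> simp [*]

theorem sq_dvd_normSq_of_coe_dvd (h : (q : ℍ[A]) ∣ x) : q ^ 2 ∣ normSq x := by
  obtain ⟨y, rfl⟩ := h
  exact ⟨normSq y, by rw [map_mul, normSq_coe]⟩

theorem coe_dvd_mul_trace (h : (q : ℍ[A]) ∣ x * p) (h' : (q : ℍ[A]) ∣ x * p') :
    (q : ℍ[A]) ∣ x * ((2 * (p * star p').re : A) : ℍ[A]) := by
  rw [← self_add_star', star_mul, star_star, mul_add, ← mul_assoc, ← mul_assoc]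
  exact dvd_add (h.mul_right _) (h'.mul_right _)

theorem coe_dvd_of_dvd_mul_coe {r : A} (hqr : IsCoprime q r) (h : (q : ℍ[A]) ∣ x * (r : ℍ[A])) :
    (q : ℍ[A]) ∣ x := by
  simp only [coe_dvd_iff, mul_coe_eq_smul, re_smul, imI_smul, imJ_smul, imK_smul,
    smul_eq_mul] at h ⊢
  exact h.imp hqr.dvd_of_dvd_mul_left
    (And.imp hqr.dvd_of_dvd_mul_left (And.imp hqr.dvd_of_dvd_mul_left hqr.dvd_of_dvd_mul_left))

theorem mul_mul_star (x p : ℍ[A]) : x * p * star p = ((normSq p : A) : ℍ[A]) * x := by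
  rw [mul_assoc, self_mul_star, coe_commutes]

theorem coe_mul_left_cancel [IsDomain A] (hq : q ≠ 0) (h : (q : ℍ[A]) * x = q * y) : x = y := by
  simpa [Quaternion.ext_iff, hq] using h

theorem mul_right_cancel_of_normSq_ne_zero [IsDomain A] (hp : normSq p ≠ 0)
    (h : x * p = y * p) : x = y := by
  apply coe_mul_left_cancel hp
  rw [← mul_mul_star, h, mul_mul_star]

theorem mul_eq_of_mul_star_eq [IsDomain A] (hp : normSq p ≠ 0)
    (h : y * star p = ((normSq p : A) : ℍ[A]) * x) : x * p = y := by
  refine mul_right_cancel_of_normSq_ne_zero (p := star p) (by rwa [normSq_star]) ?_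
  rw [mul_mul_star, h]

/-- The quaternions of norm `q ^ t` that are primitive at `q`. Divisibility is by the central
element `q`, that is, coordinatewise. -/
def primitiveSphere (q : A) (t : ℕ) : Set ℍ[A] :=
  {x | normSq x = q ^ t ∧ ¬ (q : ℍ[A]) ∣ x}

theorem image_equivProd_primitiveSphere (q : A) (t : ℕ) :
    equivProd A '' primitiveSphere q t = {x : A × A × A × A |
      x.1 ^ 2 + x.2.1 ^ 2 + x.2.2.1 ^ 2 + x.2.2.2 ^ 2 = q ^ t ∧
      ¬ (q ∣ x.1 ∧ q ∣ x.2.1 ∧ q ∣ x.2.2.1 ∧ q ∣ x.2.2.2)} := by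
  simp only [Equiv.image_eq_preimage_symm, primitiveSphere, normSq_def', coe_dvd_iff]
  rfl

theorem primitiveSphere_zero (hq : ¬ IsUnit q) :
    primitiveSphere q 0 = {x : ℍ[A] | normSq x = 1} := by
  ext x
  rw [primitiveSphere, mem_ofPred_eq, mem_ofPred_eq, pow_zero, and_iff_left_iff_imp]
  intro hx hqx
  have sq_dvd_one : q ^ 2 ∣ 1 := hx ▸ sq_dvd_normSq_of_coe_dvd hqx
  exact hq (isUnit_of_dvd_one ((dvd_pow_self q two_ne_zero).trans sq_dvd_one))

theorem dvd_normSq_of_mem_primitiveSphere (hx : x ∈ primitiveSphere q (t + 1)) :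
    q ∣ normSq x :=
  hx.1 ▸ dvd_pow_self q t.succ_ne_zero

/-- A set of representatives of the quaternions of norm `q` up to left multiplication by units,
stable under conjugation. Being a set of representatives is encoded by the property that the
counting argument needs: modulo `q`, every nonzero `x` of norm zero is killed by right
multiplication by exactly one element of the set. -/
structure IsPrimeTransversal (q : A) (R : Set ℍ[A]) : Prop where
  normSq_eq : ∀ p ∈ R, normSq p = q
  star_mem : ∀ p ∈ R, star p ∈ R
  existsUnique_dvd_mul : ∀ x : ℍ[A], q ∣ normSq x → ¬ (q : ℍ[A]) ∣ x →
    ∃! p, p ∈ R ∧ (q : ℍ[A]) ∣ x * p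

/-- The pairs `(x, p)` in `primitiveSphere q t ×ˢ R` with `q ∣ x * p`. In the tree whose vertices
are the primitive quaternions of norm a power of `q` up to units, these are the steps from `x` back
towards the root. -/
def backtrackingPairs (q : A) (R : Set ℍ[A]) (t : ℕ) : Set (ℍ[A] × ℍ[A]) :=
  {z ∈ primitiveSphere q t ×ˢ R | (q : ℍ[A]) ∣ z.1 * z.2}

theorem backtrackingPairs_subset : backtrackingPairs q R t ⊆ primitiveSphere q t ×ˢ R :=
  sep_subset _ _

namespace IsPrimeTransversal

theorem bijOn_fst (hR : IsPrimeTransversal q R) (t : ℕ) :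
    BijOn Prod.fst (backtrackingPairs q R (t + 1)) (primitiveSphere q (t + 1)) := by
  have unique : ∀ x ∈ primitiveSphere q (t + 1), ∃! p, p ∈ R ∧ (q : ℍ[A]) ∣ x * p := fun x hx =>
    hR.existsUnique_dvd_mul x (dvd_normSq_of_mem_primitiveSphere hx) hx.2
  refine ⟨fun z hz => hz.1.1, ?_, fun x hx => ?_⟩
  · rintro ⟨x, p⟩ ⟨⟨hx, hp⟩, hxp⟩ ⟨_, p'⟩ ⟨⟨-, hp'⟩, hxp'⟩ rfl
    exact Prod.ext rfl ((unique x hx).unique ⟨hp, hxp⟩ ⟨hp', hxp'⟩)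
  · obtain ⟨p, hp, hxp⟩ := (unique x hx).exists
    exact ⟨(x, p), ⟨⟨hx, hp⟩, hxp⟩, rfl⟩

theorem existsUnique_dvd_mul_star (hR : IsPrimeTransversal q R) (hy : q ∣ normSq y)
    (hqy : ¬ (q : ℍ[A]) ∣ y) : ∃! p, p ∈ R ∧ (q : ℍ[A]) ∣ y * star p := by
  obtain ⟨p, ⟨hp, hyp⟩, unique⟩ := hR.existsUnique_dvd_mul y hy hqy
  refine ⟨star p, ⟨hR.star_mem p hp, by rwa [star_star]⟩, fun p' ⟨hp', hyp'⟩ => ?_⟩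
  rw [← unique _ ⟨hR.star_mem p' hp', hyp'⟩, star_star]

theorem coe_dvd_mul_mul_star (hR : IsPrimeTransversal q R) (hp : p ∈ R) :
    (q : ℍ[A]) ∣ x * p * star p := by
  rw [mul_mul_star, hR.normSq_eq p hp]
  exact dvd_mul_right _ _

variable [IsDomain A]

theorem backtrackingPairs_zero (hR : IsPrimeTransversal q R) (hq : q ≠ 0) (hq' : ¬ IsUnit q) :
    backtrackingPairs q R 0 = ∅ := by
  refine eq_empty_of_forall_notMem fun ⟨x, p⟩ ⟨⟨hx, hp⟩, hxp⟩ => ?_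
  have sq_dvd : q ^ 2 ∣ q ^ 1 := by
    simpa [hx.1, hR.normSq_eq p hp] using sq_dvd_normSq_of_coe_dvd hxp
  exact absurd ((pow_dvd_pow_iff hq hq').1 sq_dvd) (by decide)

theorem mem_primitiveSphere_of_mul_mem (hR : IsPrimeTransversal q R) (hq : q ≠ 0) (hp : p ∈ R)
    (h : x * p ∈ primitiveSphere q (t + 1)) : x ∈ primitiveSphere q t := by
  refine ⟨mul_right_cancel₀ hq ?_, fun hqx => h.2 (hqx.mul_right p)⟩
  rw [← pow_succ, ← h.1, map_mul, hR.normSq_eq p hp]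

theorem bijOn_mul (hR : IsPrimeTransversal q R) (hq : q ≠ 0) (t : ℕ) :
    BijOn (fun z => z.1 * z.2) (primitiveSphere q t ×ˢ R \ backtrackingPairs q R t)
      (primitiveSphere q (t + 1)) := by
  have mapsTo : MapsTo (fun z => z.1 * z.2) (primitiveSphere q t ×ˢ R \ backtrackingPairs q R t)
      (primitiveSphere q (t + 1)) := fun ⟨x, p⟩ ⟨⟨hx, hp⟩, hxp⟩ =>
    ⟨by rw [map_mul, hx.1, hR.normSq_eq p hp, pow_succ], fun h => hxp ⟨⟨hx, hp⟩, h⟩⟩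
  have unique : ∀ y ∈ primitiveSphere q (t + 1), ∃! p, p ∈ R ∧ (q : ℍ[A]) ∣ y * star p :=
    fun y hy => hR.existsUnique_dvd_mul_star (dvd_normSq_of_mem_primitiveSphere hy) hy.2
  have normSq_ne_zero : ∀ p ∈ R, normSq p ≠ 0 := fun p hp => hR.normSq_eq p hp ▸ hq
  refine ⟨mapsTo, ?_, fun y hy => ?_⟩
  · rintro ⟨x, p⟩ hz ⟨x', p'⟩ hz' (h : x * p = x' * p')
    obtain rfl : p = p' := (unique _ (mapsTo hz)).unique ⟨hz.1.2, hR.coe_dvd_mul_mul_star hz.1.2⟩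
      ⟨hz'.1.2, by simpa only [h] using hR.coe_dvd_mul_mul_star hz'.1.2⟩
    exact Prod.ext (mul_right_cancel_of_normSq_ne_zero (normSq_ne_zero p hz.1.2) h) rfl
  · obtain ⟨p, hp, x, hx⟩ := (unique y hy).exists
    obtain rfl : x * p = y :=
      mul_eq_of_mul_star_eq (normSq_ne_zero p hp) (by rwa [hR.normSq_eq p hp])
    exact ⟨(x, p), ⟨⟨hR.mem_primitiveSphere_of_mul_mem hq hp hy, hp⟩, fun h => hy.2 h.2⟩, rfl⟩

theorem finite_primitiveSphere (hR : IsPrimeTransversal q R) (hq : q ≠ 0) (hfin : R.Finite)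
    (h₀ : (primitiveSphere q 0).Finite) (t : ℕ) : (primitiveSphere q t).Finite := by
  induction t with
  | zero => exact h₀
  | succ t ih => exact (hR.bijOn_mul hq t).finite_iff_finite.1 ((ih.prod hfin).sdiff)

theorem ncard_primitiveSphere_mul_ncard (hR : IsPrimeTransversal q R) (hq : q ≠ 0)
    (hfin : R.Finite) (h₀ : (primitiveSphere q 0).Finite) (t : ℕ) :
    (primitiveSphere q t).ncard * R.ncard =
      (primitiveSphere q (t + 1)).ncard + (backtrackingPairs q R t).ncard := by
  have finite_prod := (hR.finite_primitiveSphere hq hfin h₀ t).prod hfin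
  rw [← ncard_prod, ← (hR.bijOn_mul hq t).ncard_eq,
    ncard_sdiff_add_ncard_of_subset backtrackingPairs_subset finite_prod]

theorem ncard_primitiveSphere_succ (hR : IsPrimeTransversal q R) (hq : q ≠ 0) (hq' : ¬ IsUnit q)
    (hfin : R.Finite) (h₀ : (primitiveSphere q 0).Finite) (t : ℕ) :
    (primitiveSphere q (t + 1)).ncard =
      (primitiveSphere q 0).ncard * R.ncard * (R.ncard - 1) ^ t := by
  induction t with
  | zero =>
    rw [hR.ncard_primitiveSphere_mul_ncard hq hfin h₀, hR.backtrackingPairs_zero hq hq',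
      ncard_empty, add_zero, pow_zero, mul_one]
  | succ t ih =>
    have count := hR.ncard_primitiveSphere_mul_ncard hq hfin h₀ (t + 1)
    rw [(hR.bijOn_fst t).ncard_eq] at count
    rw [pow_succ, ← mul_assoc, ← ih, Nat.mul_sub_one, count, Nat.add_sub_cancel]

end IsPrimeTransversal

end CommRing

/-- The coordinates of the eight integral quaternions of norm `1`. -/
def unitCoordinates : Finset (ℤ × ℤ × ℤ × ℤ) :=
  {(1, 0, 0, 0), (-1, 0, 0, 0), (0, 1, 0, 0), (0, -1, 0, 0), (0, 0, 1, 0), (0, 0, -1, 0),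
    (0, 0, 0, 1), (0, 0, 0, -1)}

theorem sum_sq_eq_one_iff (a b c d : ℤ) :
    a ^ 2 + b ^ 2 + c ^ 2 + d ^ 2 = 1 ↔ (a, b, c, d) ∈ unitCoordinates := by
  constructor
  · intro h
    have bounds (n : ℤ) (hn : n ^ 2 ≤ 1) : -1 ≤ n ∧ n ≤ 1 :=
      abs_le.1 ((sq_le_one_iff_abs_le_one n).1 hn)
    obtain ⟨ha, ha'⟩ := bounds a (by nlinarith)
    obtain ⟨hb, hb'⟩ := bounds b (by nlinarith)
    obtain ⟨hc, hc'⟩ := bounds c (by nlinarith)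
    obtain ⟨hd, hd'⟩ := bounds d (by nlinarith)
    interval_cases a <;> interval_cases b <;> interval_cases c <;> interval_cases d <;>
      first | contradiction | decide
  · have sum_sq_eq_one : ∀ z ∈ unitCoordinates,
        z.1 ^ 2 + z.2.1 ^ 2 + z.2.2.1 ^ 2 + z.2.2.2 ^ 2 = 1 := by decide
    exact sum_sq_eq_one (a, b, c, d)

theorem setOf_normSq_eq_one :
    {x : ℍ[ℤ] | normSq x = 1} = (equivProd ℤ).symm '' unitCoordinates := by
  rw [Equiv.image_symm_eq_preimage]
  ext x
  rw [mem_ofPred_eq, normSq_def', sum_sq_eq_one_iff]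
  rfl

/-- The coordinates of the six quaternions `1 ± 2i`, `1 ± 2j`, `1 ± 2k`, one in each class of
quaternions of norm `5` up to left multiplication by units. -/
def fiveCoordinates : Finset (ℤ × ℤ × ℤ × ℤ) :=
  {(1, 2, 0, 0), (1, -2, 0, 0), (1, 0, 2, 0), (1, 0, -2, 0), (1, 0, 0, 2), (1, 0, 0, -2)}

theorem sum_sq_fiveCoordinates :
    ∀ z ∈ fiveCoordinates, z.1 ^ 2 + z.2.1 ^ 2 + z.2.2.1 ^ 2 + z.2.2.2 ^ 2 = 5 := by
  decide

theorem conj_mem_fiveCoordinates :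
    ∀ z ∈ fiveCoordinates, (z.1, -z.2.1, -z.2.2.1, -z.2.2.2) ∈ fiveCoordinates := by
  decide

theorem isCoprime_two_mul_inner_fiveCoordinates :
    ∀ z ∈ fiveCoordinates, ∀ w ∈ fiveCoordinates, z ≠ w →
      IsCoprime 5
        (2 * (z.1 * w.1 + z.2.1 * w.2.1 + z.2.2.1 * w.2.2.1 + z.2.2.2 * w.2.2.2)) := by
  simp only [Int.isCoprime_iff_gcd_eq_one]
  decide

-- The quadric `a² + b² + c² + d² = 0` over `𝔽₅` is covered by the six planes of one of its rulings,
-- and these are the annihilators of the six elements of `fiveCoordinates`.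
theorem exists_mul_eq_zero_of_sum_sq_eq_zero :
    ∀ a b c d : ZMod 5, a ^ 2 + b ^ 2 + c ^ 2 + d ^ 2 = 0 → ∃ z ∈ fiveCoordinates,
      a * z.1 - b * z.2.1 - c * z.2.2.1 - d * z.2.2.2 = 0 ∧
      a * z.2.1 + b * z.1 + c * z.2.2.2 - d * z.2.2.1 = 0 ∧
      a * z.2.2.1 - b * z.2.2.2 + c * z.1 + d * z.2.1 = 0 ∧
      a * z.2.2.2 + b * z.2.2.1 - c * z.2.1 + d * z.1 = 0 := by
  decide +kernel

theorem exists_five_dvd_mul_of_five_dvd_normSq {x : ℍ[ℤ]} (hx : 5 ∣ normSq x) :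
    ∃ z ∈ fiveCoordinates, Quaternion.coe (5 : ℤ) ∣ x * (equivProd ℤ).symm z := by
  have dvd_iff (n : ℤ) : 5 ∣ n ↔ (n : ZMod 5) = 0 := (ZMod.intCast_zmod_eq_zero_iff_dvd n 5).symm
  rw [normSq_def', dvd_iff] at hx
  push_cast at hx
  obtain ⟨z, hz, hxz⟩ := exists_mul_eq_zero_of_sum_sq_eq_zero _ _ _ _ hx
  refine ⟨z, hz, coe_dvd_iff.2 ?_⟩
  simpa [dvd_iff] using hxz

theorem eq_of_five_dvd_mul {x : ℍ[ℤ]} (hx : ¬ Quaternion.coe (5 : ℤ) ∣ x) {z w : ℤ × ℤ × ℤ × ℤ}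
    (hz : z ∈ fiveCoordinates) (hw : w ∈ fiveCoordinates)
    (hxz : Quaternion.coe (5 : ℤ) ∣ x * (equivProd ℤ).symm z)
    (hxw : Quaternion.coe (5 : ℤ) ∣ x * (equivProd ℤ).symm w) : z = w := by
  by_contra hzw
  refine hx (coe_dvd_of_dvd_mul_coe ?_ (coe_dvd_mul_trace hxz hxw))
  simpa using isCoprime_two_mul_inner_fiveCoordinates z hz w hw hzw

theorem isPrimeTransversal_five :
    IsPrimeTransversal (5 : ℤ) ((equivProd ℤ).symm '' fiveCoordinates) where
  normSq_eq := forall_mem_image.2 fun z hz =>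
    (normSq_def' _).trans (sum_sq_fiveCoordinates z hz)
  star_mem := forall_mem_image.2 fun z hz =>
    ⟨_, conj_mem_fiveCoordinates z hz, by ext <;> simp⟩
  existsUnique_dvd_mul x hx hqx := by
    obtain ⟨z, hz, hxz⟩ := exists_five_dvd_mul_of_five_dvd_normSq hx
    refine ⟨_, ⟨mem_image_of_mem _ hz, hxz⟩, ?_⟩
    rintro _ ⟨⟨w, hw, rfl⟩, hxw⟩
    rw [eq_of_five_dvd_mul hqx hw hz hxw hxz]

theorem ncard_primitiveSphere_five (t : ℕ) :
    (primitiveSphere (5 : ℤ) (t + 1)).ncard = 48 * 5 ^ t := by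
  have not_isUnit_five : ¬ IsUnit (5 : ℤ) := by decide
  have sphere_zero : primitiveSphere (5 : ℤ) 0 = (equivProd ℤ).symm '' unitCoordinates := by
    rw [primitiveSphere_zero not_isUnit_five, setOf_normSq_eq_one]
  rw [isPrimeTransversal_five.ncard_primitiveSphere_succ (by norm_num) not_isUnit_five
    (toFinite _) (sphere_zero ▸ toFinite _), sphere_zero, ncard_image_equivProd_symm,
    ncard_image_equivProd_symm]
  rfl

end FourSquares

theorem stmt8 (t : ℕ) (ht : 1 ≤ t) :
    {x : ℤ × ℤ × ℤ × ℤ |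
        x.1 ^ 2 + x.2.1 ^ 2 + x.2.2.1 ^ 2 + x.2.2.2 ^ 2 = 5 ^ t ∧
        ¬ ((5 : ℤ) ∣ x.1 ∧ (5 : ℤ) ∣ x.2.1 ∧ (5 : ℤ) ∣ x.2.2.1 ∧ (5 : ℤ) ∣ x.2.2.2)}.ncard
      = 48 * 5 ^ (t - 1) := by
  obtain ⟨n, rfl⟩ := Nat.exists_eq_add_of_le' ht
  rw [← FourSquares.image_equivProd_primitiveSphere,
    ncard_image_of_injective _ (equivProd ℤ).injective,
    FourSquares.ncard_primitiveSphere_five, Nat.add_sub_cancel]
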